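/- Let (f_τ)_{τ∈ℝ} be a family of quasiperiodically forced circle homeomorphisms over the same irrational ω, with lifts (F_τ)_{τ∈ℝ} such that (τ,θ,x) ↦ F_{τ,θ}(x) is continuous and F_{τ,θ}(x) < F_{τ',θ}(x) for all (θ,x) ∈ T¹×ℝ whenever τ < τ'. Assume each F_τ has a fibered rotation number ρ(τ). If there exist τ₁ < τ₀ < τ₂ with ρ(τ₁) = ρ(τ₂) (in particular, if τ ↦ ρ(τ) is constant on a neighborhood of τ₀), then ω, ρ(τ₀) and 1 are rationally dependent: there exists (a,b,c) ∈ ℤ³ \ {(0,0,0)} with aω + bρ(τ₀) + c = 0. -/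

import Mathlib

open Filter Topology MeasureTheory
open scoped ENNReal

noncomputable section

/-- The circle `T¹ = ℝ/ℤ`. -/
abbrev T1 := AddCircle (1 : ℝ)

/-- Fiberwise iterate of the skew product: `fiberIter ω F n θ x = F^n_θ(x)`. -/
def fiberIter (ω : ℝ) (F : T1 → ℝ → ℝ) : ℕ → T1 → ℝ → ℝ
  | 0, _, x => x
  | n + 1, θ, x => fiberIter ω F n (θ + (ω : T1)) (F θ x)

/-- `F` is (the fiber part of) a lift of a quasiperiodically forced circle homeomorphism
over `ω`: `F(θ,x) = (θ+ω, F_θ(x))`, each `F_θ` a strictly increasing homeomorphism of `ℝ`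
commuting with `x ↦ x+1`. -/
structure IsQpfLift (ω : ℝ) (F : T1 → ℝ → ℝ) : Prop where
  cont : Continuous fun p : T1 × ℝ => F p.1 p.2
  mono : ∀ θ, StrictMono (F θ)
  surj : ∀ θ, Function.Surjective (F θ)
  per  : ∀ θ x, F θ (x + 1) = F θ x + 1

/-- `ρ` is the fibered rotation number of the lift `F`. -/
def HasRotNum (ω : ℝ) (F : T1 → ℝ → ℝ) (ρ : ℝ) : Prop :=
  ∀ θ x, Tendsto (fun n : ℕ => (fiberIter ω F n θ x - x) / n) atTop (𝓝 ρ)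


section
open UnitAddTorus

/-- Birkhoff averages along a rotation. -/
noncomputable def avgRot (α : UnitAddTorus (Fin 2)) (g : UnitAddTorus (Fin 2) → ℂ) (N : ℕ)
    (x : UnitAddTorus (Fin 2)) : ℂ := (∑ n ∈ Finset.range N, g (x + n • α)) / N

lemma mFourier_add_arg (m : Fin 2 → ℤ) (x y : UnitAddTorus (Fin 2)) :
    mFourier m (x + y) = mFourier m x * mFourier m y := by
  simp [mFourier, fourier_apply, smul_add, AddCircle.toCircle_add]
  ring

lemma mFourier_nsmul_arg (m : Fin 2 → ℤ) (n : ℕ) (x y : UnitAddTorus (Fin 2)) :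
    mFourier m (x + n • y) = mFourier m x * (mFourier m y) ^ n := by
  induction n with
  | zero => simp
  | succ k ih => rw [succ_nsmul, ← add_assoc, mFourier_add_arg, ih, pow_succ]; ring

lemma norm_mFourier_apply (m : Fin 2 → ℤ) (x : UnitAddTorus (Fin 2)) : ‖mFourier m x‖ = 1 := by
  simp [mFourier, fourier_apply, Circle.norm_coe]

lemma avgRot_norm_le (α : UnitAddTorus (Fin 2)) (g : UnitAddTorus (Fin 2) → ℂ) (ε : ℝ) (hε : 0 ≤ ε)
    (hg : ∀ x, ‖g x‖ ≤ ε) (N : ℕ) (x) : ‖avgRot α g N x‖ ≤ ε := by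
  unfold avgRot
  rw [norm_div, Complex.norm_natCast]
  apply div_le_of_le_mul₀ (by positivity) hε
  refine (norm_sum_le _ _).trans ((Finset.sum_le_sum fun i _ => hg _).trans ?_)
  simp [mul_comm]

lemma avgRot_sub (α : UnitAddTorus (Fin 2)) (g h : UnitAddTorus (Fin 2) → ℂ) (N : ℕ) (x) :
    avgRot α (g - h) N x = avgRot α g N x - avgRot α h N x := by
  simp [avgRot, Finset.sum_sub_distrib, sub_div]

lemma avgRot_tendsto (α : UnitAddTorus (Fin 2))
    (hα : ∀ m : Fin 2 → ℤ, m ≠ 0 → mFourier m α ≠ 1) (g : C(UnitAddTorus (Fin 2), ℂ)) :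
    ∀ x y, Tendsto (fun N => avgRot α g N x - avgRot α g N y) atTop (𝓝 0) := by
  intro x y
  have hspan : ∀ g ∈ Submodule.span ℂ (Set.range (mFourier (d := Fin 2))),
      Tendsto (fun N => avgRot α g N x - avgRot α g N y) atTop (𝓝 0) := by
    intro g hg
    induction hg using Submodule.span_induction with
    | mem g hg =>
      obtain ⟨m, rfl⟩ := hg
      by_cases hm : m = 0
      · subst hm
        simp [mFourier_zero, avgRot]
      · have key : ∀ x, Tendsto (fun N => avgRot α (mFourier m) N x) atTop (𝓝 0) := by
          intro x
          have hz := hα m hm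
          set z := mFourier m α with hzdef
          apply squeeze_zero_norm (a := fun N : ℕ => (2 / ‖z - 1‖) / (N : ℝ))
          · intro N
            unfold avgRot
            rw [norm_div, Complex.norm_natCast]
            gcongr
            simp_rw [mFourier_nsmul_arg]
            rw [← Finset.mul_sum, norm_mul, norm_mFourier_apply, one_mul, geom_sum_eq hz, norm_div]
            gcongr
            refine (norm_sub_le _ _).trans ?_
            rw [norm_pow, norm_mFourier_apply]; norm_num
          · exact tendsto_const_div_atTop_nhds_zero_nat _
        simpa using (key x).sub (key y)
    | zero => simp [avgRot]
    | add f g _ _ hf hg =>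
      have := hf.add hg
      simp only [add_zero] at this
      refine this.congr fun N => ?_
      simp [avgRot, Finset.sum_add_distrib]; ring
    | smul c f _ hf =>
      have := hf.const_mul c
      simp only [mul_zero] at this
      refine this.congr fun N => ?_
      simp [avgRot, ← Finset.mul_sum]; ring
  have hmem : g ∈ closure (Submodule.span ℂ (Set.range (mFourier (d := Fin 2))) :
      Set C(UnitAddTorus (Fin 2), ℂ)) := by
    have : g ∈ (Submodule.span ℂ (Set.range (mFourier (d := Fin 2)))).topologicalClosure := by
      rw [span_mFourier_closure_eq_top]; trivial
    exact this
  rw [Metric.tendsto_atTop]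
  intro ε hε
  obtain ⟨h, hh, hd⟩ := Metric.mem_closure_iff.1 hmem (ε / 4) (by positivity)
  obtain ⟨N, hN⟩ := (Metric.tendsto_atTop.1 (hspan h hh)) (ε / 4) (by positivity)
  refine ⟨N, fun n hn => ?_⟩
  have h1 := hN n hn
  rw [dist_zero_right] at h1 ⊢
  have hgh : ∀ x, ‖(g - h : UnitAddTorus (Fin 2) → ℂ) x‖ ≤ ε / 4 := fun x => by
    have := (ContinuousMap.dist_apply_le_dist (f := g) (g := h) x)
    rw [dist_eq_norm] at this
    exact this.trans hd.le
  have h2 := avgRot_norm_le α _ _ (by positivity) hgh n x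
  have h3 := avgRot_norm_le α _ _ (by positivity) hgh n y
  rw [avgRot_sub] at h2 h3
  have : avgRot α g n x - avgRot α g n y = (avgRot α g n x - avgRot α h n x)
    - (avgRot α g n y - avgRot α h n y) + (avgRot α h n x - avgRot α h n y) := by ring
  rw [this]
  refine (norm_add_le _ _).trans_lt ?_
  have := norm_sub_le (avgRot α g n x - avgRot α h n x) (avgRot α g n y - avgRot α h n y)
  linarith

lemma rot_minimal (α : UnitAddTorus (Fin 2))
    (hα : ∀ m : Fin 2 → ℤ, m ≠ 0 → mFourier m α ≠ 1) (V : Set (UnitAddTorus (Fin 2)))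
    (hV : IsOpen V) (hne : V.Nonempty) (x : UnitAddTorus (Fin 2)) : ∃ j : ℕ, x + j • α ∈ V := by
  by_contra! hcon
  obtain ⟨p, hp⟩ := hne
  have hcl : IsClosed Vᶜ := hV.isClosed_compl
  have hcne : (Vᶜ).Nonempty := ⟨_, hcon 0⟩
  let r : UnitAddTorus (Fin 2) → ℝ := fun z => Metric.infDist z Vᶜ
  have hr : Continuous r := Metric.continuous_infDist_pt _
  let g : C(UnitAddTorus (Fin 2), ℂ) := ⟨fun z => (r z : ℂ), by fun_prop⟩
  have hr0 : ∀ z, 0 ≤ r z := fun z => Metric.infDist_nonneg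
  have hpos : ∀ z ∈ V, 0 < r z := fun z hz =>
    (hcl.notMem_iff_infDist_pos hcne).1 (by simpa using hz)
  have hlim : ∀ y, Tendsto (fun N => avgRot α g N y) atTop (𝓝 0) := by
    intro y
    refine (avgRot_tendsto α hα g y x).congr fun N => ?_
    have : avgRot α g N x = 0 := by
      unfold avgRot
      rw [Finset.sum_eq_zero, zero_div]
      intro n _
      have : r (x + n • α) = 0 := Metric.infDist_zero_of_mem (hcon n)
      simp [g, this]
    rw [this, sub_zero]
  obtain ⟨t, ht⟩ := isCompact_univ.elim_finite_subcover
    (fun β : UnitAddTorus (Fin 2) => (fun z => z + β) ⁻¹' V)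
    (fun β => hV.preimage (by fun_prop))
    (fun z _ => Set.mem_iUnion.2 ⟨p - z, by simpa using hp⟩)
  let s : UnitAddTorus (Fin 2) → ℝ := fun z => ∑ β ∈ t, r (z + β)
  have hs : Continuous s := by fun_prop
  obtain ⟨z0, -, hz0⟩ := isCompact_univ.exists_isMinOn ⟨x, trivial⟩ hs.continuousOn
  have hspos : 0 < s z0 := by
    obtain ⟨β, hβ, hb⟩ := Set.mem_iUnion₂.1 (ht (Set.mem_univ z0))
    exact Finset.sum_pos' (fun _ _ => hr0 _) ⟨β, hβ, hpos _ hb⟩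
  have hl : Tendsto (fun N => ∑ β ∈ t, avgRot α g N (x + β)) atTop (𝓝 0) := by
    have h := tendsto_finsetSum (f := fun β N => avgRot α g N (x + β)) (a := fun _ => (0 : ℂ))
      t (fun β _ => hlim (x + β))
    simpa only [Finset.sum_const_zero] using h
  have heq : ∀ N, ∑ β ∈ t, avgRot α g N (x + β)
      = (((∑ n ∈ Finset.range N, s (x + n • α)) / N : ℝ) : ℂ) := by
    intro N
    simp only [avgRot, s, g, ContinuousMap.coe_mk]
    rw [← Finset.sum_div, Finset.sum_comm]
    push_cast
    refine congrArg (fun w : ℂ => w / (N : ℂ)) ?_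
    refine Finset.sum_congr rfl fun n _ => Finset.sum_congr rfl fun β _ => ?_
    rw [add_right_comm]
  have hge : ∀ᶠ N in atTop, s z0 ≤ ‖∑ β ∈ t, avgRot α g N (x + β)‖ := by
    filter_upwards [eventually_gt_atTop 0] with N hN
    rw [heq, Complex.norm_real]
    refine le_trans ?_ (le_abs_self _)
    rw [le_div_iff₀ (by positivity)]
    calc s z0 * N = ∑ n ∈ Finset.range N, s z0 := by simp [mul_comm]
      _ ≤ _ := Finset.sum_le_sum fun n _ => hz0 (Set.mem_univ _)
  have := ge_of_tendsto hl.norm hge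
  simp at this
  linarith

end


lemma torus_minimal (ω ρ : ℝ)
    (hind : ∀ a b c : ℤ, (a : ℝ) * ω + (b : ℝ) * ρ + (c : ℝ) = 0 → a = 0 ∧ b = 0 ∧ c = 0)
    (U : Set (T1 × ℝ)) (hU : IsOpen U) (hne : U.Nonempty) :
    ∃ N : ℕ, ∀ (θ : T1) (y : ℝ), ∃ j ≤ N, ∃ k : ℤ,
      (θ + j • (ω : T1), y + j * ρ + k) ∈ U := by
  let α : UnitAddTorus (Fin 2) := ![(ω : T1), (ρ : T1)]
  have hα : ∀ m : Fin 2 → ℤ, m ≠ 0 → UnitAddTorus.mFourier m α ≠ 1 := by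
    intro m hm h
    apply hm
    have h' : Complex.exp ((2 * Real.pi * Complex.I) * (m 0 * ω + m 1 * ρ)) = 1 := by
      rw [← h]
      simp only [UnitAddTorus.mFourier, α, ContinuousMap.coe_mk, Fin.prod_univ_two,
        Matrix.cons_val_zero, Matrix.cons_val_one, fourier_coe_apply, ← Complex.exp_add]
      congr 1
      push_cast
      ring
    rw [Complex.exp_eq_one_iff] at h'
    obtain ⟨n, hn⟩ := h'
    have h2 : ((m 0 : ℂ) * ω + m 1 * ρ) = n := by
      have : (2 * Real.pi * Complex.I : ℂ) ≠ 0 := Complex.two_pi_I_ne_zero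
      apply mul_left_cancel₀ this
      rw [hn]; ring
    have h3 : (m 0 : ℝ) * ω + m 1 * ρ = n := by exact_mod_cast h2
    have := hind (m 0) (m 1) (-n) (by push_cast; linarith)
    ext i; fin_cases i
    · exact this.1
    · exact this.2.1
  let π : T1 × ℝ → UnitAddTorus (Fin 2) := fun p => ![p.1, (p.2 : T1)]
  let V : Set (T1 × T1) := (Prod.map id (fun y : ℝ => (y : T1))) '' U
  have hV : IsOpen V := (IsOpenMap.id.prodMap QuotientAddGroup.isOpenMap_coe) _ hU
  let W : Set (UnitAddTorus (Fin 2)) := (fun z => (z 0, z 1)) ⁻¹' V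
  have hW : IsOpen W := hV.preimage (by fun_prop)
  have hWne : W.Nonempty := by
    obtain ⟨p, hp⟩ := hne
    exact ⟨π p, ⟨p, hp, by simp only [π]; rfl⟩⟩
  obtain ⟨t, ht⟩ := isCompact_univ.elim_finite_subcover
    (fun j : ℕ => (fun z => z + j • α) ⁻¹' W)
    (fun j => hW.preimage (by fun_prop))
    (fun z _ => Set.mem_iUnion.2 (rot_minimal α hα W hW hWne z))
  refine ⟨t.sup id, fun θ y => ?_⟩
  obtain ⟨j, hj, hb⟩ := Set.mem_iUnion₂.1 (ht (Set.mem_univ (π (θ, y))))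
  refine ⟨j, Finset.le_sup (f := id) hj, ?_⟩
  obtain ⟨⟨θ', y'⟩, hq, he⟩ := hb
  simp only [Prod.map_apply, id, π, α, Pi.add_apply, Pi.smul_apply, Matrix.cons_val_zero,
    Matrix.cons_val_one, Prod.mk.injEq] at he
  obtain ⟨h1, h2⟩ := he
  subst h1
  have : ((y' - (y + j * ρ) : ℝ) : T1) = 0 := by
    rw [AddCircle.coe_sub, AddCircle.coe_add, h2, ← nsmul_eq_mul, AddCircle.coe_nsmul]; simp
  rw [AddCircle.coe_eq_zero_iff] at this
  obtain ⟨k, hk⟩ := this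
  refine ⟨k, ?_⟩
  convert hq using 2
  simp at hk
  linarith

section Dyn

lemma fi_add (ω : ℝ) (F : T1 → ℝ → ℝ) (m n : ℕ) (θ : T1) (x : ℝ) :
    fiberIter ω F (m + n) θ x = fiberIter ω F n (θ + m • (ω : T1)) (fiberIter ω F m θ x) := by
  induction m generalizing θ x with
  | zero => simp [fiberIter]
  | succ m ih =>
    rw [Nat.succ_add]
    simp only [fiberIter]
    rw [ih, succ_nsmul', add_assoc]

lemma fi_cont {ω : ℝ} {F : T1 → ℝ → ℝ} (hF : IsQpfLift ω F) (n : ℕ) :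
    Continuous fun p : T1 × ℝ => fiberIter ω F n p.1 p.2 := by
  induction n with
  | zero => simpa [fiberIter] using continuous_snd
  | succ n ih =>
    simp only [fiberIter]
    exact ih.comp (Continuous.prodMk (by fun_prop) hF.cont)

lemma fi_mono {ω : ℝ} {F : T1 → ℝ → ℝ} (hF : IsQpfLift ω F) (n : ℕ) (θ : T1) :
    Monotone (fiberIter ω F n θ) := by
  induction n generalizing θ with
  | zero => intro x y h; simpa [fiberIter] using h
  | succ n ih => intro x y h; exact ih _ ((hF.mono θ).monotone h)

lemma lift_per_nat {ω : ℝ} {F : T1 → ℝ → ℝ} (hF : IsQpfLift ω F) (θ : T1) (x : ℝ) (k : ℕ) :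
    F θ (x + k) = F θ x + k := by
  induction k with
  | zero => simp
  | succ k ih => push_cast; rw [← add_assoc, hF.per, ih, add_assoc]

lemma lift_per_int {ω : ℝ} {F : T1 → ℝ → ℝ} (hF : IsQpfLift ω F) (θ : T1) (x : ℝ) (k : ℤ) :
    F θ (x + k) = F θ x + k := by
  obtain ⟨n, rfl | rfl⟩ := k.eq_nat_or_neg
  · exact_mod_cast lift_per_nat hF θ x n
  · have := lift_per_nat hF θ (x + ((-n : ℤ) : ℝ)) n
    push_cast at this ⊢
    rw [neg_add_cancel_right] at this
    linarith

lemma fi_per {ω : ℝ} {F : T1 → ℝ → ℝ} (hF : IsQpfLift ω F) (n : ℕ) (θ : T1) (x : ℝ) (k : ℤ) :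
    fiberIter ω F n θ (x + k) = fiberIter ω F n θ x + k := by
  induction n generalizing θ x with
  | zero => simp [fiberIter]
  | succ n ih => simp only [fiberIter]; rw [lift_per_int hF, ih]

lemma fi_le {ω : ℝ} {F G : T1 → ℝ → ℝ} (hG : IsQpfLift ω G)
    (h : ∀ θ x, F θ x < G θ x) (n : ℕ) (θ : T1) (x : ℝ) :
    fiberIter ω F n θ x ≤ fiberIter ω G n θ x := by
  induction n generalizing θ x with
  | zero => simp [fiberIter]
  | succ n ih => exact (ih _ _).trans (fi_mono hG n _ (h θ x).le)

lemma gap {ω : ℝ} {F G : T1 → ℝ → ℝ} (hF : IsQpfLift ω F) (hG : IsQpfLift ω G)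
    (h : ∀ θ x, F θ x < G θ x) : ∃ ε > 0, ∀ θ x, F θ x + ε ≤ G θ x := by
  have hc : Continuous fun p : T1 × ℝ => G p.1 p.2 - F p.1 p.2 := hG.cont.sub hF.cont
  obtain ⟨p, -, hp⟩ := (isCompact_univ.prod (isCompact_Icc (a := (0 : ℝ)) (b := 1))).exists_isMinOn
    (s := (Set.univ : Set T1) ×ˢ Set.Icc (0 : ℝ) 1) ⟨(0, 0), by simp⟩ hc.continuousOn
  refine ⟨_, sub_pos.2 (h p.1 p.2), fun θ x => ?_⟩
  have h1 := hp (a := (θ, Int.fract x))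
    ⟨trivial, (Int.fract_nonneg x), (Int.fract_lt_one x).le⟩
  simp only [Set.mem_ofPred_eq] at h1
  have h2 := lift_per_int hF θ (Int.fract x) ⌊x⌋
  have h3 := lift_per_int hG θ (Int.fract x) ⌊x⌋
  rw [Int.fract_add_floor] at h2 h3
  linarith

lemma gap_shift {ω : ℝ} {F G : T1 → ℝ → ℝ} (hF : IsQpfLift ω F) (hG : IsQpfLift ω G)
    (h : ∀ θ x, F θ x < G θ x) : ∃ δ > 0, ∀ θ θ' c x, dist θ θ' < δ → |c| < δ →
      F θ' x + c ≤ G θ (x + c) := by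
  obtain ⟨ε, hε, hgap⟩ := gap hF hG h
  have hK : IsCompact ((Set.univ : Set T1) ×ˢ Set.Icc (-1 : ℝ) 2) :=
    isCompact_univ.prod isCompact_Icc
  have hu := hK.uniformContinuousOn_of_continuous hG.cont.continuousOn
  rw [Metric.uniformContinuousOn_iff] at hu
  obtain ⟨δ, hδ, hu⟩ := hu (ε / 2) (by positivity)
  refine ⟨min δ (min 1 (ε / 2)), by positivity, fun θ θ' c x hd hc => ?_⟩
  rw [lt_min_iff, lt_min_iff] at hd hc
  have h0 := Int.fract_nonneg x
  have h1 := (Int.fract_lt_one x)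
  have hc1 := abs_lt.1 hc.2.1
  have key := hu (θ, Int.fract x + c) ⟨trivial, by constructor <;> simp <;> linarith⟩
    (θ', Int.fract x) ⟨trivial, by constructor <;> simp <;> linarith⟩
    (by rw [Prod.dist_eq]; simp [Real.dist_eq, hd.1, hc.1])
  simp only [Real.dist_eq] at key
  have key := (abs_lt.1 key).1
  have h2 := lift_per_int hF θ' (Int.fract x) ⌊x⌋
  have h3 := lift_per_int hG θ (Int.fract x + c) ⌊x⌋
  have h4 := hgap θ' (Int.fract x)
  rw [add_right_comm] at h3
  rw [Int.fract_add_floor] at h2 h3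
  have := (abs_lt.1 hc.2.2).2
  linarith

lemma fi_shift {ω : ℝ} {F G : T1 → ℝ → ℝ} (hG : IsQpfLift ω G) {δ : ℝ}
    (h : ∀ θ θ' c x, dist θ θ' < δ → |c| < δ → F θ' x + c ≤ G θ (x + c))
    (n : ℕ) (θ θ' : T1) (c x : ℝ) (hd : dist θ θ' < δ) (hc : |c| < δ) :
    fiberIter ω F n θ' x + c ≤ fiberIter ω G n θ (x + c) := by
  induction n generalizing θ θ' x with
  | zero => simp [fiberIter]
  | succ n ih =>
    simp only [fiberIter]
    exact (ih _ _ _ (by rwa [dist_add_right])).trans (fi_mono hG n _ (h _ _ _ _ hd hc))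

lemma rate (a : ℕ → ℝ) (σ ρ η C : ℝ) (N : ℕ) (hη : 0 < η)
    (ha : Tendsto (fun n : ℕ => a n / n) atTop (𝓝 σ))
    (h : ∀ k : ℕ, ∃ n, k ≤ n ∧ n ≤ k * N ∧ n * ρ + k * η - C ≤ a n) : ρ < σ := by
  by_contra! hle
  set ε := η / (2 * (N + 1)) with hεd
  have hε : 0 < ε := by positivity
  have hev := ha.eventually (gt_mem_nhds (show σ < ρ + ε by linarith))
  obtain ⟨n0, hn0⟩ := eventually_atTop.1 hev
  obtain ⟨k0, hk0⟩ := exists_nat_gt (2 * C / η)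
  set k := max (max n0 k0) 1 with hk
  obtain ⟨n, h1, h2, h3⟩ := h k
  have hk1 : 1 ≤ k := le_max_right _ _
  have hkn0 : n0 ≤ k := (le_max_left _ _).trans (le_max_left _ _)
  have hkk0 : k0 ≤ k := (le_max_right _ _).trans (le_max_left _ _)
  have hlt := hn0 n (hkn0.trans h1)
  have hnpos : (0 : ℝ) < n := by exact_mod_cast (hk1.trans h1)
  rw [div_lt_iff₀ hnpos] at hlt
  have h2' : (n : ℝ) ≤ k * N := by exact_mod_cast h2
  have hkpos : (0 : ℝ) < k := by exact_mod_cast hk1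
  have hb : (n : ℝ) * ε ≤ k * (η / 2) := by
    calc (n : ℝ) * ε ≤ (k * N) * ε := by gcongr
      _ ≤ (k * (N + 1)) * ε := by gcongr; linarith
      _ = k * (η / 2) := by rw [hεd]; field_simp
  have hkC : 2 * C / η < k := hk0.trans_le (by exact_mod_cast hkk0)
  rw [div_lt_iff₀ hη] at hkC
  linarith

lemma gain (ω : ℝ) (G : T1 → ℝ → ℝ) (ρ η : ℝ) (N : ℕ) (S : T1 → ℝ → ℝ → Prop)
    (hS : ∀ θ y x, S θ y x → ∃ j, 1 ≤ j ∧ j ≤ N ∧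
      S (θ + j • (ω : T1)) (y + j * ρ + η) (fiberIter ω G j θ x))
    (θ : T1) (y x : ℝ) (h : S θ y x) (k : ℕ) :
    ∃ n, k ≤ n ∧ n ≤ k * N ∧
      S (θ + n • (ω : T1)) (y + n * ρ + k * η) (fiberIter ω G n θ x) := by
  induction k with
  | zero => exact ⟨0, le_rfl, by simp, by simpa [fiberIter] using h⟩
  | succ k ih =>
    obtain ⟨n, h1, h2, h3⟩ := ih
    obtain ⟨j, j1, j2, j3⟩ := hS _ _ _ h3
    refine ⟨n + j, by omega, by rw [Nat.succ_mul]; omega, ?_⟩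
    rw [fi_add]
    convert j3 using 1
    · rw [add_nsmul, add_assoc]
    · push_cast; ring

lemma exists_slow {ω : ℝ} {E : T1 → ℝ → ℝ} (hE : IsQpfLift ω E) {ρ : ℝ}
    (hρ : HasRotNum ω E ρ) : ∃ θ y, ∀ n : ℕ, y + n * ρ - 1 ≤ fiberIter ω E n θ y := by
  by_contra! hcon
  have hK : IsCompact ((Set.univ : Set T1) ×ˢ Set.Icc (0 : ℝ) 1) :=
    isCompact_univ.prod isCompact_Icc
  obtain ⟨t, ht⟩ := hK.elim_finite_subcover
    (fun n : ℕ => {p : T1 × ℝ | fiberIter ω E n p.1 p.2 < p.2 + n * ρ - 1})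
    (fun n => isOpen_lt (fi_cont hE n) (by fun_prop))
    (fun p _ => by
      obtain ⟨n, hn⟩ := hcon p.1 p.2
      exact Set.mem_iUnion.2 ⟨n, hn⟩)
  have hall : ∀ θ y, ∃ j, 1 ≤ j ∧ j ≤ t.sup id ∧ fiberIter ω E j θ y < y + j * ρ - 1 := by
    intro θ y
    obtain ⟨j, hj, hb⟩ := Set.mem_iUnion₂.1 (ht (show (θ, Int.fract y) ∈ _ from
      ⟨trivial, (Int.fract_nonneg y), (Int.fract_lt_one y).le⟩))
    have h3 := fi_per hE j θ (Int.fract y) ⌊y⌋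
    have hy := Int.fract_add_floor y
    rw [hy] at h3
    simp only [Set.mem_ofPred_eq] at hb
    refine ⟨j, ?_, Finset.le_sup (f := id) hj, by linarith⟩
    rcases Nat.eq_zero_or_pos j with rfl | h
    · simp [fiberIter] at hb
      linarith
    · exact h
  have hg := gain ω E ρ (-1) (t.sup id) (fun _ y x => x ≤ y) (fun θ y x hxy => by
    obtain ⟨j, h1, h2, h3⟩ := hall θ y
    exact ⟨j, h1, h2, (fi_mono hE j θ hxy).trans (by linarith)⟩) 0 0 0 le_rfl
  have := rate (fun n => -(fiberIter ω E n 0 0 - 0)) (-ρ) (-ρ) 1 0 (t.sup id) one_pos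
    (by simpa only [neg_div] using (hρ 0 0).neg) (fun k => by
      obtain ⟨n, h1, h2, h3⟩ := hg k
      exact ⟨n, h1, h2, by linarith⟩)
  exact lt_irrefl _ this

lemma fi_crude {ω : ℝ} {F : T1 → ℝ → ℝ} (hF : IsQpfLift ω F) :
    ∃ B : ℝ, 0 ≤ B ∧ ∀ (n : ℕ) θ x, x - n * B ≤ fiberIter ω F n θ x := by
  have hc : Continuous fun p : T1 × ℝ => F p.1 p.2 - p.2 := hF.cont.sub continuous_snd
  obtain ⟨p, -, hp⟩ := (isCompact_univ.prod (isCompact_Icc (a := (0 : ℝ)) (b := 1))).exists_isMinOn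
    (s := (Set.univ : Set T1) ×ˢ Set.Icc (0 : ℝ) 1) ⟨(0, 0), by simp⟩ hc.continuousOn
  have hb : ∀ θ x, x - |F p.1 p.2 - p.2| ≤ F θ x := by
    intro θ x
    have h1 := hp (a := (θ, Int.fract x))
      ⟨trivial, (Int.fract_nonneg x), (Int.fract_lt_one x).le⟩
    simp only [Set.mem_ofPred_eq] at h1
    have h2 := lift_per_int hF θ (Int.fract x) ⌊x⌋
    have hx := Int.fract_add_floor x
    rw [hx] at h2
    have := neg_abs_le (F p.1 p.2 - p.2)
    linarith
  refine ⟨|F p.1 p.2 - p.2|, abs_nonneg _, fun n => ?_⟩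
  induction n with
  | zero => intro θ x; simp [fiberIter]
  | succ n ih =>
    intro θ x
    simp only [fiberIter]
    have := ih (θ + ω) (F θ x)
    have := hb θ x
    push_cast
    linarith

lemma lower_bound {ω : ℝ} {E F : T1 → ℝ → ℝ} (hE : IsQpfLift ω E) (hF : IsQpfLift ω F)
    (hEF : ∀ θ x, E θ x < F θ x) {ρ : ℝ} (hρ : HasRotNum ω E ρ)
    (hind : ∀ a b c : ℤ, (a : ℝ) * ω + (b : ℝ) * ρ + (c : ℝ) = 0 → a = 0 ∧ b = 0 ∧ c = 0) :
    ∃ C : ℝ, ∀ (n : ℕ) θ x, x + n * ρ - C ≤ fiberIter ω F n θ x := by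
  obtain ⟨θ', y', hslow⟩ := exists_slow hE hρ
  obtain ⟨δ, hδ, hsh⟩ := gap_shift hE hF hEF
  obtain ⟨B, hB, hcr⟩ := fi_crude hF
  obtain ⟨N, hN⟩ := torus_minimal ω ρ hind (Metric.ball θ' δ ×ˢ Metric.ball y' δ)
    (Metric.isOpen_ball.prod Metric.isOpen_ball)
    ⟨(θ', y'), Metric.mem_ball_self hδ, Metric.mem_ball_self hδ⟩
  obtain ⟨M, hM⟩ := exists_nat_ge (N * (B + |ρ|))
  have hsmall : ∀ n : ℕ, n ≤ N → ∀ θ x, x + n * ρ - M ≤ fiberIter ω F n θ x := by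
    intro n hn θ x
    have h1 := hcr n θ x
    have h2 : (n : ℝ) * (B + |ρ|) ≤ N * (B + |ρ|) := by gcongr
    have h3 : (n : ℝ) * ρ ≤ n * |ρ| := by gcongr; exact le_abs_self _
    linarith
  refine ⟨M + 1, fun n θ x => ?_⟩
  obtain ⟨j, hj, k, h1, h2⟩ := hN θ x
  rcases le_total n j with h | h
  · have := hsmall n (h.trans hj) θ x
    linarith
  · obtain ⟨m, rfl⟩ := Nat.exists_eq_add_of_le h
    rw [fi_add]
    have h3 := hsmall j hj θ x
    simp only [Metric.mem_ball] at h1 h2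
    have h4 := fi_shift (ω := ω) hF hsh m _ _ (x + j * ρ + k - y') y' h1 h2
    rw [add_sub_cancel, fi_per hF] at h4
    have h5 := fi_per hF m (θ + j • (ω : T1)) (x + j * ρ) (-M)
    have h6 := fi_mono hF m (θ + j • (ω : T1)) h3
    have h7 := hslow m
    push_cast at h5 ⊢
    rw [← sub_eq_add_neg] at h5
    linarith

lemma main_gain {ω : ℝ} {F G : T1 → ℝ → ℝ} (hF : IsQpfLift ω F) (hG : IsQpfLift ω G)
    (hFG : ∀ θ x, F θ x < G θ x) {ρ σ C : ℝ} (hσ : HasRotNum ω G σ)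
    (hind : ∀ a b c : ℤ, (a : ℝ) * ω + (b : ℝ) * ρ + (c : ℝ) = 0 → a = 0 ∧ b = 0 ∧ c = 0)
    (hC : ∀ (n : ℕ) θ x, x + n * ρ - C ≤ fiberIter ω F n θ x) : ρ < σ := by
  obtain ⟨ε, hε, hgap⟩ := gap hF hG hFG
  let Ks : Set ℝ := {k | ∀ (n : ℕ) θ y, y + n * ρ ≤ fiberIter ω F n θ (y + k)}
  have hCK : C ∈ Ks := fun n θ y => by have := hC n θ (y + C); linarith
  have hbd : BddBelow Ks := ⟨0, fun k hk => by
    have := hk 0 0 0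
    simpa [fiberIter] using this⟩
  obtain ⟨k, hk, hk'⟩ := Real.lt_sInf_add_pos ⟨C, hCK⟩ (show 0 < ε / 2 by positivity)
  have hnot : k - ε / 2 ∉ Ks := fun h => by
    have := csInf_le hbd h
    linarith
  simp only [Ks, Set.mem_ofPred_eq, not_forall, not_le] at hnot
  obtain ⟨n, θ₁, y₁, hn⟩ := hnot
  obtain ⟨N, hN⟩ := torus_minimal ω ρ hind
    {p : T1 × ℝ | fiberIter ω F n p.1 (p.2 + (k - ε / 2)) < p.2 + n * ρ}
    (isOpen_lt ((fi_cont hF n).comp (by fun_prop : Continuous fun p : T1 × ℝ =>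
      (p.1, p.2 + (k - ε / 2)))) (by fun_prop)) ⟨(θ₁, y₁), hn⟩
  let S : T1 → ℝ → ℝ → Prop := fun θ y x => ∀ n : ℕ, y + n * ρ ≤ fiberIter ω F n θ x
  have hSF : ∀ (i : ℕ) θ y x, S θ y x →
      S (θ + i • (ω : T1)) (y + i * ρ) (fiberIter ω F i θ x) := by
    intro i θ y x h m
    have := h (i + m)
    rw [fi_add] at this
    push_cast at this
    linarith
  have hSup : ∀ θ y x x', S θ y x → x ≤ x' → S θ y x' :=
    fun θ y x x' h hx m => (h m).trans (fi_mono hF m θ hx)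
  have hg := gain ω G ρ (ε / 2) (N + 1) S (fun θ y x h => by
    obtain ⟨i, hi, l, hl⟩ := hN (θ + (ω : T1)) (y + ρ)
    refine ⟨i + 1, by omega, by omega, ?_⟩
    have h1 : S (θ + i • (ω : T1)) (y + i * ρ) (fiberIter ω G i θ x) :=
      hSup _ _ _ _ (hSF i θ y x h) (fi_le hG hFG i θ x)
    have h2 := hSF 1 _ _ _ h1
    rw [fi_add]
    simp only [fiberIter, one_nsmul, Nat.cast_one, one_mul] at h2 ⊢
    set X := fiberIter ω G i θ x
    have h3 := hgap (θ + i • (ω : T1)) X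
    have e1 : θ + (i + 1) • (ω : T1) = θ + i • (ω : T1) + ω := by
      rw [succ_nsmul, add_assoc]
    have e2 : θ + (ω : T1) + i • (ω : T1) = θ + i • (ω : T1) + ω := by abel
    simp only [Set.mem_ofPred_eq] at hl
    rw [e2, show y + ρ + i * ρ + l + (k - ε / 2) = (y + i * ρ + ρ + (k - ε / 2)) + l by ring,
      fi_per hF] at hl
    rw [e1]
    have h4 : y + i * ρ + ρ + (k - ε / 2) < F (θ + i • (ω : T1)) X := by
      by_contra! hle
      have h5 := fi_mono hF n (θ + i • (ω : T1) + ω) hle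
      have h6 := h2 n
      linarith
    intro m
    have h7 := hk m (θ + i • (ω : T1) + ω) (y + i * ρ + ρ + ε / 2)
    have h8 := fi_mono hF m (θ + i • (ω : T1) + ω)
      (show y + i * ρ + ρ + ε / 2 + k ≤ G (θ + i • (ω : T1)) X by linarith)
    push_cast
    linarith) 0 0 (0 + k) (fun n => hk n 0 0)
  refine rate (fun n => fiberIter ω G n 0 (0 + k) - (0 + k)) σ ρ (ε / 2) k (N + 1)
    (by positivity) (hσ 0 (0 + k)) (fun i => ?_)
  obtain ⟨n, h1, h2, h3⟩ := hg i
  refine ⟨n, h1, h2, ?_⟩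
  have := h3 0
  simp [fiberIter] at this ⊢
  linarith

lemma rot_mono {ω : ℝ} {F G : T1 → ℝ → ℝ} (hG : IsQpfLift ω G)
    (hFG : ∀ θ x, F θ x < G θ x) {ρ σ : ℝ} (hρ : HasRotNum ω F ρ) (hσ : HasRotNum ω G σ) :
    ρ ≤ σ :=
  le_of_tendsto_of_tendsto' (hρ 0 0) (hσ 0 0) fun n => by
    have := fi_le hG hFG n 0 0
    gcongr

end Dyn

/-- Corollary of Theorem A: in a continuous, strictly monotone parameter
family, the fibered rotation number can only stay constant at a parameter `τ₀` if `ω`,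
`ρ(τ₀)` and `1` are rationally dependent. -/
theorem family_locking_rationally_dependent
    (ω : ℝ) (hω : Irrational ω)
    (F : ℝ → T1 → ℝ → ℝ)
    (hlift : ∀ τ, IsQpfLift ω (F τ))
    (hcont : Continuous fun p : ℝ × T1 × ℝ => F p.1 p.2.1 p.2.2)
    (hmono : ∀ τ τ' : ℝ, τ < τ' → ∀ (θ : T1) (x : ℝ), F τ θ x < F τ' θ x)
    (ρ : ℝ → ℝ) (hρ : ∀ τ, HasRotNum ω (F τ) (ρ τ))
    (τ₀ τ₁ τ₂ : ℝ) (h₁ : τ₁ < τ₀) (h₂ : τ₀ < τ₂) (heq : ρ τ₁ = ρ τ₂) :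
    ∃ a b c : ℤ, ¬(a = 0 ∧ b = 0 ∧ c = 0) ∧ (a : ℝ) * ω + (b : ℝ) * ρ τ₀ + (c : ℝ) = 0 := by
  by_contra hno
  have e1 : ρ τ₁ ≤ ρ τ₀ := rot_mono (hlift τ₀) (hmono _ _ h₁) (hρ τ₁) (hρ τ₀)
  have e2 : ρ τ₀ ≤ ρ τ₂ := rot_mono (hlift τ₂) (hmono _ _ h₂) (hρ τ₀) (hρ τ₂)
  have e3 : ρ τ₁ = ρ τ₀ := le_antisymm e1 (by linarith)
  have hind : ∀ a b c : ℤ, (a : ℝ) * ω + (b : ℝ) * ρ τ₀ + (c : ℝ) = 0 →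
      a = 0 ∧ b = 0 ∧ c = 0 := by
    intro a b c h
    by_contra hn
    exact hno ⟨a, b, c, hn, h⟩
  obtain ⟨C, hC⟩ := lower_bound (hlift τ₁) (hlift τ₀) (hmono _ _ h₁) (e3 ▸ hρ τ₁) hind
  have := main_gain (hlift τ₀) (hlift τ₂) (hmono _ _ h₂) (hρ τ₂) hind hC
  linarith
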